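/- arXiv:1403.7609 — 2 statements merged into one kernel-verified Lean document; each statement's English description precedes it below -/
import Mathlib

section
/- Let P be a prime, let S' ⊆ ℤ/Pℤ with 0 ∈ S', S' = −S' and |S'| ≤ t, let B ⊆ ℤ/Pℤ, let l ≥ 2 be an integer and let 1 ≤ r ≤ l. Then the number of tuples (y_1, …, y_l) ∈ B^l such that the graph on {1,…,l} with an edge between i and j if and only if y_i − y_j ∈ S' has exactly r connected components is at most C(l,r)·(rt)^{2l²}·|B|^r, where C(l,r) denotes the binomial coefficient l choose r. -/
/-!
For adjacent `i` and `j`, one of `y i - y j` and `y j - y i` lies in `S`, and as `0 ∈ S` both lie in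
`S - S`. Following a path, any two entries of `y` in the same connected component differ by an
element of the `l`-fold sumset of `S - S`, `l` being the length of `y`. So once one entry `x k ∈ B`
is fixed for each of the `r` components, every `y i` lies in `l • (S - S) + {x 1, …, x r}`, a set of
at most `r * |S| ^ (2 * l)` elements, and there are at most `|B| ^ r` choices for `x`.
-/

section DifferenceGraph

open Finset
open scoped Pointwise

variable {G V ι : Type*}

/-- The graph associated with a tuple `y` and a set `S` of differences. Since `SimpleGraph.fromRel`
symmetrizes and drops loops, distinct `i` and `j` are adjacent when one of `y i - y j` and
`y j - y i` lies in `S`. -/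
def differenceGraph [Sub G] (S : Finset G) (y : V → G) : SimpleGraph V :=
  SimpleGraph.fromRel fun i j ↦ y i - y j ∈ S

section AddGroup

variable [AddGroup G] [DecidableEq G] {S : Finset G} {y : V → G} {i j : V}

theorem sub_mem_sub_of_differenceGraph_adj (hS : 0 ∈ S) (h : (differenceGraph S y).Adj i j) :
    y i - y j ∈ S - S := by
  obtain ⟨-, hij | hji⟩ := (SimpleGraph.fromRel_adj _ _ _).mp h
  · simpa only [sub_zero] using sub_mem_sub hij hS
  · simpa only [zero_sub, neg_sub] using sub_mem_sub hS hji

theorem sub_mem_nsmul_sub_of_differenceGraph_walk (hS : 0 ∈ S)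
    (p : (differenceGraph S y).Walk i j) : y i - y j ∈ p.length • (S - S) := by
  induction p with
  | nil => simp
  | cons h p ih =>
    rw [SimpleGraph.Walk.length_cons, succ_nsmul', ← sub_add_sub_cancel]
    exact add_mem_add (sub_mem_sub_of_differenceGraph_adj hS h) ih

theorem sub_mem_card_nsmul_sub_of_differenceGraph_reachable [Fintype V] (hS : 0 ∈ S)
    (h : (differenceGraph S y).Reachable i j) : y i - y j ∈ Fintype.card V • (S - S) := by
  obtain ⟨p, hp⟩ := h.exists_isPath
  have hzero : 0 ∈ S - S := by simpa only [sub_zero] using sub_mem_sub hS hS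
  exact nsmul_subset_nsmul_right hzero hp.length_lt.le
    (sub_mem_nsmul_sub_of_differenceGraph_walk hS p)

theorem exists_forall_mem_card_nsmul_sub_add_image [Fintype V] {B : Finset G} {r : ℕ} (hS : 0 ∈ S)
    (hB : ∀ i, y i ∈ B) (hr : Nat.card (differenceGraph S y).ConnectedComponent = r) :
    ∃ x : Fin r → G, (∀ k, x k ∈ B) ∧ ∀ i, y i ∈ Fintype.card V • (S - S) + univ.image x := by
  let e := Finite.equivFinOfCardEq hr
  refine ⟨fun k ↦ y (e.symm k).out, fun k ↦ hB _, fun i ↦ ?_⟩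
  let C := (differenceGraph S y).connectedComponentMk i
  have hreach : (differenceGraph S y).Reachable i C.out :=
    SimpleGraph.ConnectedComponent.exact C.out_eq.symm
  refine mem_add.mpr ⟨y i - y C.out, sub_mem_card_nsmul_sub_of_differenceGraph_reachable hS hreach,
    y C.out, mem_image.mpr ⟨e C, mem_univ _, ?_⟩, sub_add_cancel _ _⟩
  rw [e.symm_apply_apply]

end AddGroup

theorem card_nsmul_sub_le [SubNegMonoid G] [DecidableEq G] (S : Finset G) (n : ℕ) :
    #(n • (S - S)) ≤ #S ^ (2 * n) :=
  calc #(n • (S - S)) ≤ #(S - S) ^ n := card_nsmul_le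
    _ ≤ (#S * #S) ^ n := Nat.pow_le_pow_left card_sub_le n
    _ = #S ^ (2 * n) := by rw [← sq, ← pow_mul]

theorem ncard_le_of_forall_exists_mem_add_image [Add G] [DecidableEq G] [Fintype V] [Fintype ι]
    {Y : Set (V → G)} {B D : Finset G}
    (hY : ∀ y ∈ Y, ∃ x : ι → G, (∀ k, x k ∈ B) ∧ ∀ i, y i ∈ D + univ.image x) :
    Y.ncard ≤ #B ^ Fintype.card ι * (#D * Fintype.card ι) ^ Fintype.card V := by
  classical
  let F : (ι → G) → Finset (V → G) := fun x ↦ Fintype.piFinset fun _ ↦ D + univ.image x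
  have hcover : Y ⊆ (Fintype.piFinset fun _ : ι ↦ B).biUnion F := by
    intro y hy
    simpa only [F, mem_coe, mem_biUnion, Fintype.mem_piFinset] using hY y hy
  have hfiber (x : ι → G) : #(F x) ≤ (#D * Fintype.card ι) ^ Fintype.card V := by
    simp only [F, Fintype.card_piFinset, prod_const, card_univ]
    gcongr
    exact card_add_le.trans (Nat.mul_le_mul_left _ card_image_le)
  calc Y.ncard ≤ #((Fintype.piFinset fun _ : ι ↦ B).biUnion F) := by
        simpa only [Set.ncard_coe_finset] using Set.ncard_le_ncard hcover
    _ ≤ #(Fintype.piFinset fun _ : ι ↦ B) * (#D * Fintype.card ι) ^ Fintype.card V :=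
        card_biUnion_le_card_mul _ _ _ fun x _ ↦ hfiber x
    _ = #B ^ Fintype.card ι * (#D * Fintype.card ι) ^ Fintype.card V := by
        rw [Fintype.card_piFinset, prod_const, card_univ]

theorem stmt14_general [AddGroup G] [Fintype V] {S : Finset G} (hS : 0 ∈ S) (B : Finset G)
    (r : ℕ) :
    {y : V → G | (∀ i, y i ∈ B) ∧
        Nat.card (differenceGraph S y).ConnectedComponent = r}.ncard ≤
      (r * #S) ^ (2 * Fintype.card V ^ 2) * #B ^ r := by
  classical
  let n := Fintype.card V
  have hr : r ^ n ≤ r ^ (2 * n ^ 2) := by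
    obtain hn | hn := n.eq_zero_or_pos
    · simp [hn]
    · calc r ^ n ≤ (r ^ n) ^ (2 * n) := Nat.le_self_pow (by lia) _
        _ = r ^ (2 * n ^ 2) := by ring
  calc _ ≤ #B ^ Fintype.card (Fin r) * (#(n • (S - S)) * Fintype.card (Fin r)) ^ n :=
        ncard_le_of_forall_exists_mem_add_image fun _ hy ↦
          exists_forall_mem_card_nsmul_sub_add_image hS hy.1 hy.2
    _ = #B ^ r * (#(n • (S - S)) * r) ^ n := by rw [Fintype.card_fin]
    _ ≤ #B ^ r * (#S ^ (2 * n) * r) ^ n := by gcongr; exact card_nsmul_sub_le S n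
    _ = #S ^ (2 * n ^ 2) * r ^ n * #B ^ r := by ring
    _ ≤ #S ^ (2 * n ^ 2) * r ^ (2 * n ^ 2) * #B ^ r := by gcongr
    _ = (r * #S) ^ (2 * n ^ 2) * #B ^ r := by ring

end DifferenceGraph

theorem stmt14
    (P : ℕ) [Fact P.Prime] (t : ℕ) (S' : Finset (ZMod P))
    (h0 : (0 : ZMod P) ∈ S') (hneg : ∀ x ∈ S', -x ∈ S') (hcard : S'.card ≤ t)
    (B : Finset (ZMod P)) (l : ℕ) (hl : 2 ≤ l) (r : ℕ) (hr1 : 1 ≤ r) (hrl : r ≤ l) :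
    Set.ncard {y : Fin l → ZMod P | (∀ i, y i ∈ B) ∧
        Nat.card (SimpleGraph.fromRel
          (fun i j : Fin l => y i - y j ∈ S')).ConnectedComponent = r}
      ≤ Nat.choose l r * (r * t) ^ (2 * l ^ 2) * B.card ^ r := by
  have hbound := Fintype.card_fin l ▸ stmt14_general (V := Fin l) h0 B r
  exact hbound.trans (by gcongr; exact le_mul_of_one_le_of_le (Nat.choose_pos hrl) (by gcongr))
end

section
/- Let L be a translation invariant linear equation in s = 3 variables and let g_L be a function as described. Define h_L(η) = η/(2·g_L^{*−1}(η/2))² for η ∈ (0,1]. Then for every η ∈ (0,1], every prime P and every A ⊆ ℤ/Pℤ with |A| ≥ ηP, the number of triples (x_1, x_2, x_3) ∈ A³ with c_1x_1 + c_2x_2 + c_3x_3 = 0 in ℤ/Pℤ is at least h_L(η)·P². -/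
/-!
Consider the progressions `a + d, a + 2d, …, a + md` in `ℤ/Pℤ` with `d ≠ 0`, where `m` is such that
every subset of `{1, …, m}` of density `η / 2` contains a nontrivial solution. If `m < P`, averaging
over `a` shows that for every `d` at least `ηP / 2` of them meet `A` in at least `ηm / 2` indices,
and by translation invariance each of these carries a nontrivial solution inside `A`. Conversely, a
nontrivial solution has two distinct coordinates, and their indices in a progression through them
determine `a` and `d`, so it is counted at most `m ^ 2` times. If `P ≤ m`, the constant solutions
already suffice.
-/

open Finset

section Averaging

variable {α β G K : Type*} [LinearOrder K]

theorem sum_le_card_filter_le_mul_add_card_mul [Semiring K] [IsStrictOrderedRing K]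
    {s : Finset α} {f : α → K} {t M : K} (ht : 0 ≤ t) (hf : ∀ i ∈ s, f i ≤ M) :
    ∑ i ∈ s, f i ≤ #{i ∈ s | t ≤ f i} * M + #s * t := by
  have hlarge : ∑ i ∈ s with t ≤ f i, f i ≤ #{i ∈ s | t ≤ f i} * M := by
    simpa only [nsmul_eq_mul] using
      sum_le_card_nsmul _ f M fun i hi ↦ hf i (mem_of_mem_filter i hi)
  have hsmall : ∑ i ∈ s with ¬ t ≤ f i, f i ≤ #s * t := calc
    ∑ i ∈ s with ¬ t ≤ f i, f i ≤ #{i ∈ s | ¬ t ≤ f i} * t := by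
      simpa only [nsmul_eq_mul] using
        sum_le_card_nsmul _ f t fun i hi ↦ (not_le.mp (mem_filter.mp hi).2).le
    _ ≤ #s * t := by gcongr; exact filter_subset _ _
  rw [← sum_filter_add_sum_filter_not s (t ≤ f ·)]
  exact add_le_add hlarge hsmall

variable [AddGroup G] [Fintype G] [DecidableEq G]

theorem sum_card_filter_add_mem (s : Finset β) (f : β → G) (A : Finset G) :
    ∑ a, #{j ∈ s | a + f j ∈ A} = #s * #A := by
  have hfiber (j : β) : #{a | a + f j ∈ A} = #A :=
    card_equiv (Equiv.addRight (f j)) fun a ↦ by simp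
  calc ∑ a, #{j ∈ s | a + f j ∈ A} = ∑ j ∈ s, #{a | a + f j ∈ A} :=
        sum_card_bipartiteAbove_eq_sum_card_bipartiteBelow fun a j ↦ a + f j ∈ A
    _ = #s * #A := by simp only [hfiber, sum_const, smul_eq_mul]

theorem mul_card_le_card_filter_mul_card_le [CommRing K] [IsStrictOrderedRing K] {s : Finset β}
    (hs : s.Nonempty) (f : β → G) {A : Finset G} {δ ε : K} (hδ : 0 ≤ δ)
    (hA : (δ + ε) * Fintype.card G ≤ #A) :
    ε * Fintype.card G ≤ #{a | δ * #s ≤ #{j ∈ s | a + f j ∈ A}} := by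
  have hs₀ : (0 : K) < #s := by exact_mod_cast hs.card_pos
  have hsum : ∑ a, (#{j ∈ s | a + f j ∈ A} : K) = #s * #A := by
    exact_mod_cast sum_card_filter_add_mem s f A
  have havg := sum_le_card_filter_le_mul_add_card_mul (s := univ) (t := δ * #s) (M := #s)
    (f := fun a ↦ (#{j ∈ s | a + f j ∈ A} : K)) (by positivity)
    fun a _ ↦ by exact_mod_cast card_filter_le s _
  rw [hsum, card_univ] at havg
  refine le_of_mul_le_mul_left ?_ hs₀
  linarith [mul_le_mul_of_nonneg_left hA hs₀.le]

end Averaging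

section LinearEquation

variable {ι R : Type*} [Fintype ι]

/-- Every subset of `{1, …, N}` of density at least `δ` contains a nontrivial solution of the linear
equation with coefficients `c`. This is the property that `g_L(N)` has as a value of `δ`. -/
def ForcesNontrivialSolution (c : ι → ℤ) (N : ℕ) (δ : ℝ) : Prop :=
  ∀ B : Finset ℕ, B ⊆ Icc 1 N → δ * (N : ℝ) ≤ (#B : ℝ) →
    ∃ x : ι → ℕ, (∀ i, x i ∈ B) ∧ ∑ i, c i * (x i : ℤ) = 0 ∧ ∃ i j, x i ≠ x j

theorem ForcesNontrivialSolution.mono {c : ι → ℤ} {N : ℕ} {δ δ' : ℝ}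
    (h : ForcesNontrivialSolution c N δ) (hδ : δ ≤ δ') : ForcesNontrivialSolution c N δ' :=
  fun B hB hcard ↦ h B hB ((mul_le_mul_of_nonneg_right hδ N.cast_nonneg).trans hcard)

/-- The solutions in `A`, trivial ones included, of the linear equation with coefficients `c`. -/
def solutionsIn [DecidableEq ι] [CommRing R] [Fintype R] [DecidableEq R] (c : ι → ℤ)
    (A : Finset R) : Finset (ι → R) :=
  {x | (∀ i, x i ∈ A) ∧ ∑ i, (c i : R) * x i = 0}

@[simp]
theorem mem_solutionsIn [DecidableEq ι] [CommRing R] [Fintype R] [DecidableEq R] {c : ι → ℤ}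
    {A : Finset R} {x : ι → R} :
    x ∈ solutionsIn c A ↔ (∀ i, x i ∈ A) ∧ ∑ i, (c i : R) * x i = 0 := by
  simp only [solutionsIn, mem_filter_univ]

theorem sum_intCast_mul_add_natCast_mul_eq_zero [CommRing R] {c : ι → ℤ} (hc : ∑ i, c i = 0)
    {x : ι → ℕ} (hx : ∑ i, c i * (x i : ℤ) = 0) (a d : R) :
    ∑ i, (c i : R) * (a + x i * d) = 0 := by
  have hcR : ∑ i, (c i : R) = 0 := by exact_mod_cast congrArg (Int.cast : ℤ → R) hc
  have hxR : ∑ i, (c i : R) * x i = 0 := by exact_mod_cast congrArg (Int.cast : ℤ → R) hx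
  simp only [mul_add, ← mul_assoc, sum_add_distrib, ← sum_mul, hcR, hxR, zero_mul, add_zero]

theorem card_le_card_solutionsIn [Nonempty ι] [DecidableEq ι] [CommRing R] [Fintype R]
    [DecidableEq R] {c : ι → ℤ} (hc : ∑ i, c i = 0) (A : Finset R) : #A ≤ #(solutionsIn c A) := by
  refine card_le_card_of_injOn (Function.const ι) (fun a ha ↦ ?_)
    Function.const_injective.injOn
  have hsol : ∑ i, (c i : R) * a = 0 := by
    rw [← sum_mul, ← Int.cast_sum, hc, Int.cast_zero, zero_mul]
  simpa [hsol] using ha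

end LinearEquation

section Progressions

variable {ι R : Type*} [CommRing R]

/-- All coordinates of `y` are terms of the progression `a + d, a + 2d, …, a + md`, which is encoded
as `p = (a, d)`. -/
def LiesOnProgression (m : ℕ) (p : R × R) (y : ι → R) : Prop :=
  ∀ i, ∃ j ∈ Icc 1 m, p.1 + j * p.2 = y i

theorem progression_ext [IsDomain R] {p q : R × R} {j k u v : R} (huv : u ≠ v)
    (hpu : p.1 + j * p.2 = u) (hpv : p.1 + k * p.2 = v)
    (hqu : q.1 + j * q.2 = u) (hqv : q.1 + k * q.2 = v) : p = q := by
  have hjk : j - k ≠ 0 := fun h ↦ huv <| by rw [← hpu, ← hpv, sub_eq_zero.mp h]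
  have hstep : p.2 = q.2 := mul_left_cancel₀ hjk <| by
    linear_combination hpu - hpv - hqu + hqv
  exact Prod.ext (by linear_combination hpu - hqu - j * hstep) hstep

theorem card_le_sq_of_forall_liesOnProgression [IsDomain R] {m : ℕ} {y : ι → R}
    (hy : ∃ i j, y i ≠ y j) {S : Finset (R × R)} (hS : ∀ p ∈ S, LiesOnProgression m p y) :
    #S ≤ m ^ 2 := by
  obtain ⟨i₀, i₁, hne⟩ := hy
  calc #S ≤ #(Icc 1 m ×ˢ Icc 1 m) := by
        refine card_le_card_of_forall_subsingleton
          (fun p jk ↦ p.1 + jk.1 * p.2 = y i₀ ∧ p.1 + jk.2 * p.2 = y i₁) (fun p hp ↦ ?_) ?_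
        · obtain ⟨j, hj, hpj⟩ := hS p hp i₀
          obtain ⟨k, hk, hpk⟩ := hS p hp i₁
          exact ⟨(j, k), mem_product.mpr ⟨hj, hk⟩, hpj, hpk⟩
        · rintro jk - p ⟨-, hp₀, hp₁⟩ q ⟨-, hq₀, hq₁⟩
          exact progression_ext hne hp₀ hp₁ hq₀ hq₁
    _ = m ^ 2 := by rw [card_product, Nat.card_Icc, Nat.add_sub_cancel, sq]

variable [Fintype R] [DecidableEq R]

/-- The nonconstant progressions `a + d, a + 2d, …, a + md`, encoded as `(a, d)`, of which a
proportion at least `δ` of the indices belongs to `A`. -/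
noncomputable def richProgressions (A : Finset R) (m : ℕ) (δ : ℝ) : Finset (R × R) :=
  {p | p.2 ≠ 0 ∧ δ * m ≤ #{j ∈ Icc 1 m | p.1 + ((j : ℕ) : R) * p.2 ∈ A}}

theorem mul_le_card_richProgressions {A : Finset R} {m : ℕ} (hm : m ≠ 0) {δ ε : ℝ} (hδ : 0 ≤ δ)
    (hA : (δ + ε) * Fintype.card R ≤ #A) :
    ((Fintype.card R : ℝ) - 1) * (ε * Fintype.card R) ≤ #(richProgressions A m δ) := by
  have hrich : #(richProgressions A m δ) =
      ∑ d ∈ univ.erase (0 : R), #{a | δ * m ≤ #{j ∈ Icc 1 m | a + ((j : ℕ) : R) * d ∈ A}} := by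
    rw [richProgressions, card_filter, Fintype.sum_prod_type_right]
    simp only [card_filter, ← filter_ne', sum_filter, ite_and, sum_ite_irrel, sum_const_zero]
  have hpopular (d : R) :
      ε * Fintype.card R ≤ #{a | δ * m ≤ #{j ∈ Icc 1 m | a + ((j : ℕ) : R) * d ∈ A}} := by
    simpa only [Nat.card_Icc, Nat.add_sub_cancel] using mul_card_le_card_filter_mul_card_le
      (nonempty_Icc.mpr (Nat.one_le_iff_ne_zero.mpr hm)) (fun j : ℕ ↦ (j : R) * d) hδ hA
  rw [hrich, Nat.cast_sum]
  calc ((Fintype.card R : ℝ) - 1) * (ε * Fintype.card R)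
      = #(univ.erase (0 : R)) • (ε * Fintype.card R) := by
        rw [nsmul_eq_mul, cast_card_erase_of_mem (mem_univ 0), card_univ]
    _ ≤ _ := card_nsmul_le_sum _ _ _ fun d _ ↦ hpopular d

variable [Fintype ι] [DecidableEq ι] [IsDomain R] {c : ι → ℤ} {A : Finset R} {m : ℕ} {δ : ℝ}

theorem exists_nontrivial_liesOnProgression (hc : ∑ i, c i = 0)
    (hforce : ForcesNontrivialSolution c m δ) (hm : (Set.Icc 1 m).InjOn (Nat.cast : ℕ → R))
    {p : R × R} (hp : p ∈ richProgressions A m δ) :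
    ∃ y ∈ solutionsIn c A, (∃ i j, y i ≠ y j) ∧ LiesOnProgression m p y := by
  obtain ⟨hd, hdense⟩ := (mem_filter.mp hp).2
  obtain ⟨x, hx, hx₀, i, j, hij⟩ := hforce _ (filter_subset _ _) hdense
  have hxI (i : ι) : x i ∈ Icc 1 m := (mem_filter.mp (hx i)).1
  refine ⟨fun i ↦ p.1 + x i * p.2, mem_solutionsIn.mpr ⟨fun i ↦ (mem_filter.mp (hx i)).2,
    sum_intCast_mul_add_natCast_mul_eq_zero hc hx₀ _ _⟩, ⟨i, j, fun h ↦ hij ?_⟩,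
    fun i ↦ ⟨x i, hxI i, rfl⟩⟩
  exact hm (mem_Icc.mp (hxI i)) (mem_Icc.mp (hxI j)) (mul_right_cancel₀ hd (add_left_cancel h))

theorem card_richProgressions_le (hc : ∑ i, c i = 0)
    (hforce : ForcesNontrivialSolution c m δ) (hm : (Set.Icc 1 m).InjOn (Nat.cast : ℕ → R)) :
    #(richProgressions A m δ) ≤ #(solutionsIn c A) * m ^ 2 := by
  classical
  calc #(richProgressions A m δ) = #(richProgressions A m δ) * 1 := (mul_one _).symm
    _ ≤ #{y ∈ solutionsIn c A | ∃ i j, y i ≠ y j} * m ^ 2 := by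
      refine card_mul_le_card_mul (LiesOnProgression m) (fun p hp ↦ ?_) fun y hy ↦ ?_
      · obtain ⟨y, hy, hne, hpy⟩ := exists_nontrivial_liesOnProgression hc hforce hm hp
        exact card_pos.mpr ⟨y, mem_filter.mpr ⟨mem_filter.mpr ⟨hy, hne⟩, hpy⟩⟩
      · exact card_le_sq_of_forall_liesOnProgression (mem_filter.mp hy).2
          fun p hp ↦ (mem_filter.mp hp).2
    _ ≤ #(solutionsIn c A) * m ^ 2 := by gcongr; exact filter_subset _ _

theorem le_card_solutionsIn_of_injOn_natCast (hc : ∑ i, c i = 0) (hm₀ : m ≠ 0) {η : ℝ} (hη : 0 ≤ η)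
    (hforce : ForcesNontrivialSolution c m (η / 2))
    (hm : (Set.Icc 1 m).InjOn (Nat.cast : ℕ → R)) (hA : η * Fintype.card R ≤ #A) :
    η / (2 * (m : ℝ)) ^ 2 * (Fintype.card R : ℝ) ^ 2 ≤ #(solutionsIn c A) := by
  have hlower := mul_le_card_richProgressions hm₀ (div_nonneg hη zero_le_two) (ε := η / 2)
    (by rwa [add_halves])
  have hupper : (#(richProgressions A m (η / 2)) : ℝ) ≤ #(solutionsIn c A) * (m : ℝ) ^ 2 := by
    exact_mod_cast card_richProgressions_le hc hforce hm
  have hcard : (2 : ℝ) ≤ Fintype.card R := by exact_mod_cast Fintype.one_lt_card (α := R)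
  have hquarter : η * (Fintype.card R : ℝ) ^ 2 ≤
      4 * (((Fintype.card R : ℝ) - 1) * (η / 2 * Fintype.card R)) := by
    linarith [mul_nonneg (mul_nonneg hη (Nat.cast_nonneg (Fintype.card R))) (sub_nonneg.mpr hcard)]
  rw [div_mul_eq_mul_div, div_le_iff₀ (by positivity)]
  linarith

end Progressions

section ZMod

variable {ι : Type*} [Fintype ι] [Nonempty ι] [DecidableEq ι] {c : ι → ℤ} {η : ℝ} {P : ℕ}
  [Fact P.Prime] {A : Finset (ZMod P)}

theorem le_card_solutionsIn_of_le (hc : ∑ i, c i = 0) {m : ℕ} (hm : P ≤ m) (hη : 0 ≤ η)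
    (hA : η * (P : ℝ) ≤ #A) :
    η / (2 * (m : ℝ)) ^ 2 * (P : ℝ) ^ 2 ≤ #(solutionsIn c A) := by
  have hm₁ : (1 : ℝ) ≤ m := by exact_mod_cast (Fact.out : P.Prime).one_le.trans hm
  calc η / (2 * (m : ℝ)) ^ 2 * (P : ℝ) ^ 2 = η * P * (P / (2 * m) ^ 2) := by ring
    _ ≤ η * P * 1 := by
      gcongr
      refine div_le_one_of_le₀ ?_ (by positivity)
      calc (P : ℝ) ≤ m := by exact_mod_cast hm
        _ ≤ (2 * m) ^ 2 := by nlinarith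
    _ ≤ #A := by rwa [mul_one]
    _ ≤ #(solutionsIn c A) := by exact_mod_cast card_le_card_solutionsIn hc A

theorem le_card_solutionsIn_zmod (hc : ∑ i, c i = 0) {m : ℕ} (hm : m ≠ 0) (hη : 0 ≤ η)
    (hforce : ForcesNontrivialSolution c m (η / 2)) (hA : η * (P : ℝ) ≤ #A) :
    η / (2 * (m : ℝ)) ^ 2 * (P : ℝ) ^ 2 ≤ #(solutionsIn c A) := by
  rcases lt_or_ge m P with hmP | hPm
  · have hinj : (Set.Icc 1 m).InjOn (Nat.cast : ℕ → ZMod P) :=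
      (CharP.natCast_injOn_Iio (ZMod P) P).mono fun j hj ↦ hj.2.trans_lt hmP
    simpa only [ZMod.card] using
      le_card_solutionsIn_of_injOn_natCast hc hm hη hforce hinj (by rwa [ZMod.card])
  · exact le_card_solutionsIn_of_le hc hPm hη hA

theorem stmt16_general (hc : ∑ i, c i = 0) {g : ℕ → ℝ}
    (hg : ∀ N : ℕ, 1 ≤ N → ForcesNontrivialSolution c N (g N)) (hη : 0 ≤ η)
    (hgη : ∃ m, g m ≤ η / 2) (hA : η * (P : ℝ) ≤ #A) :
    η / (2 * ((sInf {m : ℕ | g m ≤ η / 2} : ℕ) : ℝ)) ^ 2 * (P : ℝ) ^ 2 ≤ #(solutionsIn c A) := by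
  have hmem : g (sInf {m | g m ≤ η / 2}) ≤ η / 2 := Nat.sInf_mem hgη
  set m := sInf {m | g m ≤ η / 2}
  rcases Nat.eq_zero_or_pos m with hm | hm
  · -- `g 0` is unconstrained, so the infimum may be `0`; the bound is then `η / 0 * P ^ 2 = 0`.
    simp [hm]
  · exact le_card_solutionsIn_zmod hc hm.ne' hη ((hg m hm).mono hmem) hA

end ZMod

theorem stmt16
    (cc : Fin 3 → ℤ) (hcc : ∀ i, cc i ≠ 0) (hti : ∑ i, cc i = 0)
    (gL : ℕ → ℝ) (hg0 : ∀ N, 0 ≤ gL N) (hganti : Antitone gL)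
    (hglim : Filter.Tendsto gL Filter.atTop (nhds 0))
    (hgprop : ∀ N : ℕ, 1 ≤ N → ∀ A : Finset ℕ, A ⊆ Finset.Icc 1 N →
      gL N * (N : ℝ) ≤ (A.card : ℝ) →
      ∃ x : Fin 3 → ℕ, (∀ i, x i ∈ A) ∧
        (∑ i, cc i * (x i : ℤ)) = 0 ∧ ∃ i j, x i ≠ x j)
    (η : ℝ) (hη : 0 < η) (hη1 : η ≤ 1)
    (P : ℕ) [Fact P.Prime] (A : Finset (ZMod P)) (hA : η * (P : ℝ) ≤ (A.card : ℝ)) :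
    η / (2 * ((sInf {m : ℕ | gL m ≤ η / 2} : ℕ) : ℝ)) ^ 2 * (P : ℝ) ^ 2
      ≤ ((Finset.univ.filter (fun x : Fin 3 → ZMod P =>
          (∀ i, x i ∈ A) ∧ ∑ i, (cc i : ZMod P) * x i = 0)).card : ℝ) := by
  convert stmt16_general hti hgprop hη.le (hglim.eventually_le_const (half_pos hη)).exists hA
  ext x
  simp
end
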